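/- arXiv:1604.07014 — 3 statements merged into one kernel-verified Lean document; each statement's English description precedes it below -/
import Mathlib

section
/- Let ε > 0, Û₀ > 0, L > 0, and define E[θ] = ∫_0^L ( (θ'(R) − Û₀)²/2 + ε·cos(2θ(R)) ) dR on continuously differentiable functions θ : [0,L] → ℝ. Let θ : [0,L] → ℝ be twice continuously differentiable, satisfy θ''(R) + 2ε·sin(2θ(R)) = 0 for all R ∈ [0,L], θ'(0) = θ'(L) = Û₀, θ'(R) > 0 for all R ∈ [0,L], θ(L − R) = −θ(R) for all R ∈ [0,L], and θ(L) = θ₀ with π/2 < θ₀ < π. Then θ is a local minimum of E. (A perversion whose amplitude exceeds π/2 crosses both maxima of the potential V(θ) = −ε·cos(2θ) and only one minimum, so its stability index is J = 1 − 2 = −1 and it is stable.) -/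
/-- The non-dimensional ladder energy
`E[θ] = ∫_0^L ((θ'(R) - Û₀)²/2 + ε·cos(2θ(R))) dR`. -/
noncomputable def ladderEnergy (ε U₀ L : ℝ) (θ : ℝ → ℝ) : ℝ :=
  ∫ R in (0 : ℝ)..L, ((deriv θ R - U₀) ^ 2 / 2 + ε * Real.cos (2 * θ R))

theorem aux_taylor (a x : ℝ) (hx : |x| ≤ 1/2) :
    -(4 * |x|^3) ≤ Real.cos (2*a+2*x) - Real.cos (2*a) + 2 * Real.sin (2*a) * x
      + 2 * Real.cos (2*a) * x^2 := by
  have h2 : |2*x| = 2*|x| := by rw [abs_mul]; norm_num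
  have hc := Real.cos_bound (x := 2*x) (by rw [h2]; linarith)
  have hs := Real.sin_bound (x := 2*x) (by rw [h2]; linarith)
  rw [h2] at hc hs
  set t := |x| with ht
  have ht0 : 0 ≤ t := abs_nonneg x
  have h4 : t^4 ≤ t^3 / 2 := by
    have : 0 ≤ t^3 := by positivity
    nlinarith
  have h3 : |x^3| = t^3 := by rw [abs_pow]
  have hC : |Real.cos (2*x) - 1 + 2*x^2| ≤ 5/12 * t^3 + t^3/12 := by
    have e : Real.cos (2*x) - 1 + 2*x^2 = Real.cos (2*x) - (1 - (2*x)^2/2) := by ring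
    rw [e]; refine hc.trans ?_
    have : 0 ≤ t^3 := by positivity
    nlinarith
  have hS : |Real.sin (2*x) - 2*x| ≤ 2 * t^3 := by
    have e : Real.sin (2*x) - 2*x = (Real.sin (2*x) - (2*x - (2*x)^3/6)) + -(4/3 * x^3) := by ring
    rw [e]; refine (abs_add_le _ _).trans ?_
    have e2 : |-(4/3 * x^3)| = 4/3 * t^3 := by rw [abs_neg, abs_mul, h3]; norm_num
    rw [e2]
    have : 0 ≤ t^3 := by positivity
    have h5 : t^5 ≤ t^4 / 2 := by
      have : 0 ≤ t^4 := by positivity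
      nlinarith
    nlinarith
  have hp : |Real.cos (2*a) * (Real.cos (2*x) - 1 + 2*x^2)| ≤ 1 * (5/12 * t^3 + t^3/12) := by
    rw [abs_mul]
    exact mul_le_mul (Real.abs_cos_le_one _) hC (abs_nonneg _) zero_le_one
  have hq : |Real.sin (2*a) * (Real.sin (2*x) - 2*x)| ≤ 1 * (2 * t^3) := by
    rw [abs_mul]
    exact mul_le_mul (Real.abs_sin_le_one _) hS (abs_nonneg _) zero_le_one
  have := abs_le.1 hp
  have := abs_le.1 hq
  have : 0 ≤ t^3 := by positivity
  rw [Real.cos_add]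
  nlinarith

set_option maxHeartbeats 2000000 in
/-- A perversion equilibrium whose amplitude `θ₀ = θ(L)` satisfies
`π/2 < θ₀ < π` is stable (a local minimum of the ladder energy). -/
theorem stmt_11 (ε U₀ L θ₀ : ℝ) (hε : 0 < ε) (hU₀ : 0 < U₀) (hL : 0 < L)
    (θ : ℝ → ℝ) (hθ : ContDiff ℝ 2 θ)
    (hEL : ∀ R ∈ Set.Icc 0 L, deriv (deriv θ) R + 2 * ε * Real.sin (2 * θ R) = 0)
    (hb0 : deriv θ 0 = U₀) (hbL : deriv θ L = U₀)
    (hmono : ∀ R ∈ Set.Icc 0 L, 0 < deriv θ R)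
    (hodd : ∀ R ∈ Set.Icc 0 L, θ (L - R) = -θ R)
    (hamp : θ L = θ₀) (hθ₀ : Real.pi / 2 < θ₀ ∧ θ₀ < Real.pi) :
    ∃ δ > 0, ∀ φ : ℝ → ℝ, ContDiff ℝ 1 φ →
      (∀ R ∈ Set.Icc 0 L, |φ R| + |deriv φ R| < δ) →
      ladderEnergy ε U₀ L θ ≤ ladderEnergy ε U₀ L (θ + φ) := by
  have hv1 : ContDiff ℝ 1 (deriv θ) := by
    have : ContDiff ℝ (1+1) θ := by simpa [one_add_one_eq_two] using hθ
    exact (contDiff_succ_iff_deriv.1 this).2.2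
  have hθd : ∀ R, HasDerivAt θ (deriv θ R) R := fun R =>
    (hθ.differentiable (by norm_num) R).hasDerivAt
  have hvd : ∀ R ∈ Set.Icc 0 L, HasDerivAt (deriv θ) (-(2 * ε * Real.sin (2 * θ R))) R := by
    intro R hR
    have := (hv1.differentiable (by norm_num) R).hasDerivAt
    rwa [eq_neg_of_add_eq_zero_left (hEL R hR)] at this
  have hvc : Continuous (deriv θ) := hv1.continuous
  have hne : (Set.Icc 0 L).Nonempty := ⟨0, by simp [hL.le]⟩
  obtain ⟨x0, hx0, hmin⟩ := isCompact_Icc.exists_isMinOn hne hvc.continuousOn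
  obtain ⟨x1, hx1, hmax⟩ := isCompact_Icc.exists_isMaxOn hne hvc.continuousOn
  set m := deriv θ x0 with hm
  set M := deriv θ x1 with hM
  have hm0 : 0 < m := hmono x0 hx0
  have hM0 : 0 < M := hmono x1 hx1
  have hml : ∀ R ∈ Set.Icc 0 L, m ≤ deriv θ R := fun R hR => hmin hR
  have hMl : ∀ R ∈ Set.Icc 0 L, deriv θ R ≤ M := fun R hR => hmax hR
  have hsin : Real.sin (2 * θ₀) < 0 := by
    have : Real.sin (2*θ₀) = - Real.sin (2*θ₀ - Real.pi) := by rw [Real.sin_sub_pi]; ring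
    rw [this]
    have := Real.sin_pos_of_pos_of_lt_pi (x := 2*θ₀ - Real.pi) (by linarith) (by linarith)
    linarith
  set q := -(2 * ε * Real.sin (2 * θ₀)) with hq
  have hq0 : 0 < q := by rw [hq]; nlinarith
  have hθ0 : θ 0 = -θ₀ := by
    have := hodd L ⟨hL.le, le_rfl⟩
    rw [sub_self, hamp] at this; exact this
  obtain ⟨s, hs0, hs1, hs2⟩ : ∃ s > 0, s * L^2 ≤ m^2/2 ∧ s * L ≤ U₀ * q := by
    refine ⟨min (m^2/2/L^2) (U₀*q/L), lt_min (by positivity) (by positivity), ?_, ?_⟩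
    · rw [← le_div_iff₀ (by positivity)]; exact min_le_left _ _
    · rw [← le_div_iff₀ (by positivity)]; exact min_le_right _ _
  set c := s / (2 * M^2) with hc
  have hc0 : 0 < c := by positivity
  refine ⟨min (1/2) (c/(8*ε)), lt_min (by norm_num) (by positivity), ?_⟩
  intro φ hφ hsmall
  have hφd : ∀ R, HasDerivAt φ (deriv φ R) R := fun R =>
    (hφ.differentiable (by norm_num) R).hasDerivAt
  have hφ'c : Continuous (deriv φ) := hφ.continuous_deriv (by norm_num)
  have hφc : Continuous φ := hφ.continuous
  have hθc : Continuous θ := hθ.continuous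
  have hder : deriv (θ + φ) = fun R => deriv θ R + deriv φ R := by
    funext R; exact ((hθd R).add (hφd R)).deriv
  unfold ladderEnergy
  rw [hder]
  simp only [Pi.add_apply]
  rw [← sub_nonneg, ← intervalIntegral.integral_sub
    (Continuous.intervalIntegrable (by fun_prop) _ _)
    (Continuous.intervalIntegrable (by fun_prop) _ _)]
  let w : ℝ → ℝ := fun R => -(2 * ε * Real.sin (2 * θ R)) / deriv θ R - s * R / (deriv θ R)^2
  let w' : ℝ → ℝ := fun R => -4 * ε * Real.cos (2 * θ R) - s / (deriv θ R)^2
    + s^2 * R^2 / (deriv θ R)^4 - (w R)^2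
  have hw : ∀ R ∈ Set.Icc 0 L, HasDerivAt w (w' R) R := by
    intro R hR
    have hv0 := (hmono R hR).ne'
    have h1 := ((((hθd R).const_mul 2).sin.const_mul (2*ε)).neg.div (hvd R hR) hv0).sub
      (((hasDerivAt_id R).const_mul s).div ((hvd R hR).pow 2) (pow_ne_zero 2 hv0))
    refine HasDerivAt.congr_deriv h1 ?_
    simp only [w', w, id]
    field_simp
    simp
    ring
  let B : ℝ → ℝ := fun R => (deriv θ R - U₀) * φ R + w R * (φ R)^2 / 2
  let B' : ℝ → ℝ := fun R => -(2 * ε * Real.sin (2 * θ R)) * φ R + (deriv θ R - U₀) * deriv φ R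
    + (w' R * (φ R)^2 + w R * (2 * φ R * deriv φ R)) / 2
  have hB : ∀ R ∈ Set.Icc 0 L, HasDerivAt B (B' R) R := by
    intro R hR
    have h1 := (((hvd R hR).sub_const U₀).mul (hφd R)).add
      (((hw R hR).mul ((hφd R).pow 2)).div_const 2)
    refine HasDerivAt.congr_deriv h1 ?_
    simp only [B']
    simp
  have key := intervalIntegral.sub_le_integral_of_hasDeriv_right_of_le (g := B) (g' := B')
    (φ := fun R => ((deriv θ R + deriv φ R - U₀) ^ 2 / 2 + ε * Real.cos (2 * (θ R + φ R)))
      - ((deriv θ R - U₀) ^ 2 / 2 + ε * Real.cos (2 * θ R))) hL.le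
    (fun R hR => (hB R hR).continuousAt.continuousWithinAt)
    (fun R hR => (hB R (Set.Ioo_subset_Icc_self hR)).hasDerivWithinAt)
    (Continuous.integrableOn_Icc (by fun_prop)) ?_
  · refine le_trans ?_ key
    have hwL : 0 ≤ w L := by
      simp only [w]
      rw [hbL, hamp, ← hq, sub_nonneg, div_le_div_iff₀ (by positivity) (by positivity)]
      nlinarith
    have hw0 : w 0 ≤ 0 := by
      simp only [w]
      rw [hb0, hθ0, mul_neg, Real.sin_neg]
      have : -(2 * ε * -Real.sin (2 * θ₀)) = - q := by rw [hq]; ring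
      rw [this]
      have : 0 < q / U₀ := by positivity
      simp [neg_div]; exact this.le
    simp only [B]
    rw [hbL, hb0]
    nlinarith [mul_nonneg hwL (sq_nonneg (φ L)), mul_nonneg (neg_nonneg.2 hw0) (sq_nonneg (φ 0))]
  · intro R hR'
    have hR := Set.Ioo_subset_Icc_self hR'
    have hv0 := hmono R hR
    have hφs := hsmall R hR
    have hd := abs_nonneg (deriv φ R)
    have hφ1 : |φ R| ≤ 1/2 := by
      have := min_le_left (1/2) (c/(8*ε)); linarith
    have hφ2 : |φ R| ≤ c/(8*ε) := by
      have := min_le_right (1/2) (c/(8*ε)); linarith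
    rw [le_div_iff₀ (by positivity)] at hφ2
    have hT := aux_taylor (θ R) (φ R) hφ1
    have hric : w' R + (w R)^2 ≤ -4 * ε * Real.cos (2 * θ R) - c := by
      simp only [w']
      set v := deriv θ R with hv
      have h1 : s * R^2 ≤ v^2/2 := by
        have : R^2 ≤ L^2 := pow_le_pow_left₀ hR.1 hR.2 2
        have : m^2 ≤ v^2 := pow_le_pow_left₀ hm0.le (hml R hR) 2
        nlinarith
      have h2 : s^2 * R^2 / v^4 ≤ s / (2 * v^2) := by
        rw [div_le_div_iff₀ (by positivity) (by positivity)]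
        have := mul_le_mul_of_nonneg_left h1 (show 0 ≤ 2 * s * v^2 by positivity)
        nlinarith
      have h3 : c ≤ s / (2 * v^2) := by
        have : v^2 ≤ M^2 := pow_le_pow_left₀ hv0.le (hMl R hR) 2
        rw [hc]
        exact div_le_div_of_nonneg_left hs0.le (by positivity) (by linarith)
      have h4 : s / v^2 = s/(2*v^2) + s/(2*v^2) := by field_simp; norm_num
      linarith
    have hcub : 4 * ε * |φ R|^3 ≤ c/2 * (φ R)^2 := by
      rw [← sq_abs (φ R)]
      have := mul_le_mul_of_nonneg_right hφ2 (sq_nonneg |φ R|)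
      linarith
    have h5 := mul_le_mul_of_nonneg_right hric (sq_nonneg (φ R))
    have h6 := mul_le_mul_of_nonneg_left hT hε.le
    simp only [B']
    rw [mul_add 2 (θ R) (φ R)]
    linarith [sq_nonneg (deriv φ R - w R * φ R)]
end

section
/- Let ε > 0, Û₀ > 0, L > 0, and define E[θ] = ∫_0^L ( (θ'(R) − Û₀)²/2 + ε·cos(2θ(R)) ) dR on continuously differentiable functions θ : [0,L] → ℝ. Let θ : [0,L] → ℝ be twice continuously differentiable, satisfy θ''(R) + 2ε·sin(2θ(R)) = 0 for all R ∈ [0,L], θ'(0) = θ'(L) = Û₀, θ'(R) > 0 for all R ∈ [0,L], θ(L − R) = −θ(R) for all R ∈ [0,L], and θ(L) = θ₀ with 0 < θ₀ < π/2. Then θ is not a local minimum of E: for every δ > 0 there exists a continuously differentiable φ : [0,L] → ℝ with sup_{R ∈ [0,L]} (|φ(R)| + |φ'(R)|) < δ and E[θ + φ] < E[θ]. (A perversion whose amplitude is below π/2 crosses only the minimum of the potential V(θ) = −ε·cos(2θ) at θ = 0, so its stability index is J = +1 and it is unstable.) -/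
theorem cos_taylor_aux (a x : ℝ) (hx : |x| ≤ 1) :
    Real.cos (a + x) ≤ Real.cos a - x * Real.sin a - x ^ 2 / 2 * Real.cos a + |x| ^ 3 := by
  have h1 := Real.cos_bound hx
  have h2 := Real.sin_bound hx
  have h0 : 0 ≤ |x| := abs_nonneg x
  have h4 : |x| ^ 4 ≤ |x| ^ 3 := pow_le_pow_of_le_one h0 hx (by norm_num)
  have h45 : |x| ^ 5 ≤ |x| ^ 3 := pow_le_pow_of_le_one h0 hx (by norm_num)
  have h3 : |x ^ 3| = |x| ^ 3 := abs_pow x 3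
  have hp : 0 ≤ |x| ^ 3 := by positivity
  have h5 : |Real.sin x - x| ≤ |x| ^ 3 * (1 / 2) := by
    have e : Real.sin x - x = (Real.sin x - (x - x ^ 3 / 6)) + (- (x ^ 3 / 6)) := by ring
    have e2 : |-(x ^ 3 / 6)| = |x| ^ 3 / 6 := by
      rw [abs_neg, abs_div, h3]; norm_num
    rw [e]
    refine (abs_add_le _ _).trans ?_
    rw [e2]
    linarith
  have h6 : |Real.cos a * (Real.cos x - (1 - x ^ 2 / 2))| ≤ |x| ^ 3 * (1 / 2) := by
    rw [abs_mul]
    have := mul_le_mul_of_nonneg_right (Real.abs_cos_le_one a)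
      (abs_nonneg (Real.cos x - (1 - x ^ 2 / 2)))
    linarith
  have h7 : |Real.sin a * (Real.sin x - x)| ≤ |x| ^ 3 * (1 / 2) := by
    rw [abs_mul]
    have := mul_le_mul_of_nonneg_right (Real.abs_sin_le_one a) (abs_nonneg (Real.sin x - x))
    linarith
  rw [Real.cos_add]
  have h8 := (abs_le.mp h6).2
  have h9 := (abs_le.mp h7).1
  linarith

/-- A perversion equilibrium whose amplitude `θ₀ = θ(L)` satisfies
`0 < θ₀ < π/2` is unstable (not a local minimum of the ladder energy). -/
theorem stmt_12 (ε U₀ L θ₀ : ℝ) (hε : 0 < ε) (hU₀ : 0 < U₀) (hL : 0 < L)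
    (θ : ℝ → ℝ) (hθ : ContDiff ℝ 2 θ)
    (hEL : ∀ R ∈ Set.Icc 0 L, deriv (deriv θ) R + 2 * ε * Real.sin (2 * θ R) = 0)
    (hb0 : deriv θ 0 = U₀) (hbL : deriv θ L = U₀)
    (hmono : ∀ R ∈ Set.Icc 0 L, 0 < deriv θ R)
    (hodd : ∀ R ∈ Set.Icc 0 L, θ (L - R) = -θ R)
    (hamp : θ L = θ₀) (hθ₀ : 0 < θ₀ ∧ θ₀ < Real.pi / 2) :
    ∀ δ > 0, ∃ φ : ℝ → ℝ, ContDiff ℝ 1 φ ∧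
      (∀ R ∈ Set.Icc 0 L, |φ R| + |deriv φ R| < δ) ∧
      ladderEnergy ε U₀ L (θ + φ) < ladderEnergy ε U₀ L θ := by
  intro δ hδ
  obtain ⟨hp0, hp1⟩ := hθ₀
  have hw1 : ContDiff ℝ 1 (deriv θ) := by
    have h : ContDiff ℝ (1 + 1) θ := by simpa [one_add_one_eq_two] using hθ
    exact (contDiff_succ_iff_deriv.mp h).2.2
  have hθd : Differentiable ℝ θ := hθ.differentiable (by norm_num)
  have hwd : Differentiable ℝ (deriv θ) := hw1.differentiable (by norm_num)
  have hvc : Continuous (deriv (deriv θ)) := hw1.continuous_deriv (by norm_num)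
  have hθc : Continuous θ := hθ.continuous
  have hwc : Continuous (deriv θ) := hw1.continuous
  obtain ⟨w, hw⟩ : ∃ w, w = deriv θ := ⟨_, rfl⟩
  obtain ⟨v, hv⟩ : ∃ v, v = deriv w := ⟨_, rfl⟩
  rw [← hw] at hw1 hwd hwc hvc hEL hb0 hbL hmono
  rw [← hv] at hvc hEL
  have hDθ : ∀ R, HasDerivAt θ (w R) R := fun R => by rw [hw]; exact (hθd R).hasDerivAt
  have hDw : ∀ R, HasDerivAt w (v R) R := fun R => by rw [hv]; exact (hwd R).hasDerivAt
  have hθ0 : θ 0 = -θ₀ := by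
    have := hodd 0 ⟨le_rfl, hL.le⟩
    rw [sub_zero, hamp] at this
    linarith
  have hs : 0 < Real.sin (2 * θ₀) := Real.sin_pos_of_pos_of_lt_pi (by linarith) (by linarith)
  obtain ⟨M, hM1, hM⟩ : ∃ M : ℝ, 1 ≤ M ∧ ∀ R ∈ Set.Icc 0 L, |w R| + |v R| ≤ M := by
    have hc : Continuous fun R => |w R| + |v R| := by fun_prop
    obtain ⟨C, hC⟩ := (isCompact_Icc (a := (0:ℝ)) (b := L)).bddAbove_image hc.continuousOn
    exact ⟨max 1 C, le_max_left _ _, fun R hR =>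
      (hC (Set.mem_image_of_mem _ hR)).trans (le_max_right _ _)⟩
  have hMp : 0 < M := by linarith
  obtain ⟨t, ht, ht1, ht2, ht3⟩ : ∃ t : ℝ, 0 < t ∧ t * M < δ ∧ t * M ≤ 1 / 2 ∧
      4 * M ^ 3 * L * t < U₀ * Real.sin (2 * θ₀) := by
    have hUs : 0 < U₀ * Real.sin (2 * θ₀) := mul_pos hU₀ hs
    refine ⟨min (δ / (2 * M)) (min (1 / (2 * M)) (U₀ * Real.sin (2 * θ₀) / (8 * M ^ 3 * L))),
      by positivity, ?_, ?_, ?_⟩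
    · have h : min (δ / (2 * M)) (min (1 / (2 * M)) (U₀ * Real.sin (2 * θ₀) / (8 * M ^ 3 * L)))
        ≤ δ / (2 * M) := min_le_left _ _
      rw [le_div_iff₀ (by positivity)] at h
      linarith
    · have h : min (δ / (2 * M)) (min (1 / (2 * M)) (U₀ * Real.sin (2 * θ₀) / (8 * M ^ 3 * L)))
        ≤ 1 / (2 * M) := (min_le_right _ _).trans (min_le_left _ _)
      rw [le_div_iff₀ (by positivity)] at h
      linarith
    · have h : min (δ / (2 * M)) (min (1 / (2 * M)) (U₀ * Real.sin (2 * θ₀) / (8 * M ^ 3 * L)))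
        ≤ U₀ * Real.sin (2 * θ₀) / (8 * M ^ 3 * L) := (min_le_right _ _).trans (min_le_right _ _)
      rw [le_div_iff₀ (by positivity)] at h
      linarith
  have hDφ : ∀ R, HasDerivAt (fun x => t * w x) (t * v R) R := fun R => (hDw R).const_mul t
  have hDs : ∀ R, HasDerivAt (θ + fun x => t * w x) (w R + t * v R) R :=
    fun R => (hDθ R).add (hDφ R)
  refine ⟨fun x => t * w x, contDiff_const.mul hw1, ?_, ?_⟩
  · intro R hR
    rw [(hDφ R).deriv, abs_mul, abs_mul, abs_of_pos ht]
    have := mul_le_mul_of_nonneg_left (hM R hR) ht.le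
    linarith
  · unfold ladderEnergy
    have e1 : deriv (θ + fun x => t * w x) = fun R => w R + t * v R :=
      funext fun R => (hDs R).deriv
    rw [e1, ← hw]
    rw [← sub_neg, ← intervalIntegral.integral_sub
      (Continuous.intervalIntegrable (by simp only [Pi.add_apply]; fun_prop) _ _)
      (Continuous.intervalIntegrable (by fun_prop) _ _)]
    have hle : ∀ R ∈ Set.Icc 0 L,
        (((w R + t * v R - U₀) ^ 2 / 2 + ε * Real.cos (2 * (θ + fun x => t * w x) R)) -
          ((w R - U₀) ^ 2 / 2 + ε * Real.cos (2 * θ R))) ≤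
        t * (2 * w R - U₀) * v R + t ^ 2 / 2 * (v R * (-2 * ε * Real.sin (2 * θ R)) +
          w R * (-2 * ε * (Real.cos (2 * θ R) * (2 * w R)))) + 8 * ε * t ^ 3 * M ^ 3 := by
      intro R hR
      have hwM : |w R| ≤ M := by linarith [hM R hR, abs_nonneg (v R)]
      have hx : |2 * (t * w R)| ≤ 2 * (t * M) := by
        rw [abs_mul, abs_mul, abs_of_pos ht, abs_two]
        gcongr
      have hc := cos_taylor_aux (2 * θ R) (2 * (t * w R)) (by linarith)
      have hx3 : |2 * (t * w R)| ^ 3 ≤ (2 * (t * M)) ^ 3 := by gcongr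
      have hc2 := mul_le_mul_of_nonneg_left (hc.trans (add_le_add_right hx3 _)) hε.le
      have hvR : v R = - (2 * ε * Real.sin (2 * θ R)) := by linarith [hEL R hR]
      have e2 : 2 * (θ + fun x => t * w x) R = 2 * θ R + 2 * (t * w R) := by
        simp only [Pi.add_apply]; ring
      rw [e2, hvR]
      linear_combination hc2
    have hD : ∀ R, HasDerivAt (fun R => t * (w R ^ 2 - U₀ * w R) +
        t ^ 2 / 2 * (w R * (-2 * ε * Real.sin (2 * θ R))) + 8 * ε * t ^ 3 * M ^ 3 * R)
        (t * (2 * w R - U₀) * v R + t ^ 2 / 2 * (v R * (-2 * ε * Real.sin (2 * θ R)) +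
          w R * (-2 * ε * (Real.cos (2 * θ R) * (2 * w R)))) + 8 * ε * t ^ 3 * M ^ 3) R := by
      intro R
      have a1 := ((((hDw R).pow 2).sub ((hDw R).const_mul U₀)).const_mul t)
      have a2 := ((hDw R).mul ((((hDθ R).const_mul 2).sin).const_mul (-2 * ε))).const_mul (t ^ 2 / 2)
      have a3 := (hasDerivAt_id R).const_mul (8 * ε * t ^ 3 * M ^ 3)
      refine ((a1.add a2).add a3).congr_deriv ?_
      simp
      ring
    refine (intervalIntegral.integral_mono_on hL.le
      (Continuous.intervalIntegrable (by simp only [Pi.add_apply]; fun_prop) _ _)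
      (Continuous.intervalIntegrable (by fun_prop) _ _) hle).trans_lt ?_
    rw [intervalIntegral.integral_eq_sub_of_hasDerivAt (fun R _ => hD R)
      (Continuous.intervalIntegrable (by fun_prop) _ _)]
    rw [hb0, hbL, hamp, hθ0, mul_neg, Real.sin_neg]
    have hk : 0 < 2 * ε * t ^ 2 := by positivity
    have := mul_lt_mul_of_pos_left ht3 hk
    linear_combination this
end

section
/- Let ε > 0, Û₀ > 0, L > 0, and define E[θ] = ∫_0^L ( (θ'(R) − Û₀)²/2 + ε·cos(2θ(R)) ) dR on continuously differentiable functions θ : [0,L] → ℝ. Let θ : [0,L] → ℝ be twice continuously differentiable, satisfy θ''(R) + 2ε·sin(2θ(R)) = 0 for all R ∈ [0,L], θ'(0) = θ'(L) = Û₀, θ'(R) > 0 for all R ∈ [0,L], with the symmetry θ(L − R) − π/2 = −(θ(R) − π/2) for all R ∈ [0,L] (a left-handed helical solution centered on π/2). If θ(L) ∈ (π/2, π), then θ is a local minimum of E; if θ(L) ∈ (π, 3π/2), then θ is not a local minimum of E. -/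
theorem cos_taylor (a y : ℝ) (hy : |y| ≤ 1/2) :
    |Real.cos (a + 2*y) - (Real.cos a - 2 * Real.sin a * y - 2 * Real.cos a * y^2)| ≤ 8 * |y|^3 := by
  have hx : |2*y| ≤ 1 := by rw [abs_mul]; norm_num; linarith
  have h1 := Real.cos_bound hx
  have h2 := Real.sin_bound hx
  rw [Real.cos_add]
  set c := Real.cos (2*y) - (1 - (2*y)^2/2) with hc
  set s := Real.sin (2*y) - (2*y - (2*y)^3/6) with hs
  have e : Real.cos a * Real.cos (2*y) - Real.sin a * Real.sin (2*y) -
      (Real.cos a - 2 * Real.sin a * y - 2 * Real.cos a * y^2)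
      = Real.cos a * c - Real.sin a * s + Real.sin a * (8*y^3/6) := by
    rw [hc, hs]; ring
  rw [e]
  have hca := Real.abs_cos_le_one a
  have hsa := Real.abs_sin_le_one a
  have n1 : |Real.cos a * c| ≤ |c| := by
    rw [abs_mul]; nlinarith [abs_nonneg c]
  have n2 : |Real.sin a * s| ≤ |s| := by
    rw [abs_mul]; nlinarith [abs_nonneg s]
  have n3 : |Real.sin a * (8*y^3/6)| ≤ 8/6*|y|^3 := by
    have : |8*y^3/6| = 8/6*|y|^3 := by
      rw [abs_div, abs_mul, abs_pow]; norm_num; ring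
    rw [abs_mul, this]
    nlinarith [pow_nonneg (abs_nonneg y) 3]
  have n4 : |2*y|^4 ≤ 8*|y|^3 := by
    rw [abs_mul, mul_pow]; norm_num
    have : |y|^4 = |y|^3*|y| := by ring
    nlinarith [pow_nonneg (abs_nonneg y) 3]
  have n5 : |2*y|^5 ≤ |2*y|^4 := pow_le_pow_of_le_one (abs_nonneg _) hx (by norm_num)
  calc _ ≤ |Real.cos a * c| + |Real.sin a * s| + |Real.sin a * (8*y^3/6)| := by
        exact (abs_add_le _ _).trans (add_le_add (abs_sub _ _) le_rfl)
    _ ≤ _ := by nlinarith [pow_nonneg (abs_nonneg y) 3]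

theorem energy_diff (ε U₀ L : ℝ) (θ φ : ℝ → ℝ) (hθ : ContDiff ℝ 1 θ) (hφ : ContDiff ℝ 1 φ) :
    ladderEnergy ε U₀ L (θ + φ) - ladderEnergy ε U₀ L θ =
      ∫ R in (0:ℝ)..L, ((deriv θ R - U₀) * deriv φ R + (deriv φ R)^2/2
        + ε * (Real.cos (2 * θ R + 2 * φ R) - Real.cos (2 * θ R))) := by
  have c1 := hθ.continuous
  have c2 := hφ.continuous
  have c3 := hθ.continuous_deriv le_rfl
  have c4 := hφ.continuous_deriv le_rfl
  have e : deriv (θ + φ) = fun R => deriv θ R + deriv φ R := by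
    ext R
    exact deriv_add (hθ.differentiable one_ne_zero R) (hφ.differentiable one_ne_zero R)
  unfold ladderEnergy
  rw [e, ← intervalIntegral.integral_sub]
  · congr 1
    ext R
    simp only [Pi.add_apply, mul_add]
    ring
  · apply Continuous.intervalIntegrable
    simp only [Pi.add_apply]
    fun_prop
  · apply Continuous.intervalIntegrable
    fun_prop

/-- derivative of the calibration function -/
theorem calib (ε U₀ η m R : ℝ) (θ φ : ℝ → ℝ) (hθ : ContDiff ℝ 2 θ) (hφ : ContDiff ℝ 1 φ)
    (hw : 0 < deriv θ R) (hEL : deriv (deriv θ) R + 2 * ε * Real.sin (2 * θ R) = 0) :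
    HasDerivAt (fun R => (deriv θ R - U₀) * φ R
        + (1/2) * (-2 * ε * Real.sin (2 * θ R) / deriv θ R - η * (R - m)) * φ R ^ 2)
      (-2 * ε * Real.sin (2 * θ R) * φ R + (deriv θ R - U₀) * deriv φ R
        + (1/2) * (-4 * ε * Real.cos (2 * θ R) - (-2 * ε * Real.sin (2 * θ R) / deriv θ R)^2 - η)
           * φ R ^ 2
        + (-2 * ε * Real.sin (2 * θ R) / deriv θ R - η * (R - m)) * φ R * deriv φ R) R := by
  have h1 : HasDerivAt θ (deriv θ R) R := (hθ.differentiable (by norm_num) R).hasDerivAt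
  have h2 : HasDerivAt φ (deriv φ R) R := (hφ.differentiable (by norm_num) R).hasDerivAt
  have hd : ContDiff ℝ 1 (deriv θ) := by
    have : ContDiff ℝ (1+1) θ := by norm_num; exact hθ
    exact (contDiff_succ_iff_deriv.1 this).2.2
  have h3 : HasDerivAt (deriv θ) (deriv (deriv θ) R) R :=
    (hd.differentiable (by norm_num) R).hasDerivAt
  have h3' : deriv (deriv θ) R = -2 * ε * Real.sin (2 * θ R) := by linarith
  rw [h3'] at h3
  have h4 := (((h1.const_mul 2).sin).const_mul (-2 * ε)).fun_div h3 hw.ne'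
  have h5 := (h4.fun_sub (((hasDerivAt_id' R).sub_const m).const_mul η)).const_mul (1/2)
  have h6 := ((h3.sub_const U₀).fun_mul h2).fun_add (h5.fun_mul (h2.fun_pow 2))
  refine h6.congr_deriv ?_
  have := hw.ne'
  field_simp
  ring

set_option maxHeartbeats 2000000 in
/-- A left-handed helical equilibrium (monotone, symmetric about `θ = π/2`) is
stable if `θ(L) ∈ (π/2, π)` and unstable if `θ(L) ∈ (π, 3π/2)`. -/
theorem stmt_13 (ε U₀ L : ℝ) (hε : 0 < ε) (hU₀ : 0 < U₀) (hL : 0 < L)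
    (θ : ℝ → ℝ) (hθ : ContDiff ℝ 2 θ)
    (hEL : ∀ R ∈ Set.Icc 0 L, deriv (deriv θ) R + 2 * ε * Real.sin (2 * θ R) = 0)
    (hb0 : deriv θ 0 = U₀) (hbL : deriv θ L = U₀)
    (hmono : ∀ R ∈ Set.Icc 0 L, 0 < deriv θ R)
    (hsym : ∀ R ∈ Set.Icc 0 L,
      θ (L - R) - Real.pi / 2 = -(θ R - Real.pi / 2)) :
    (θ L ∈ Set.Ioo (Real.pi / 2) Real.pi →
      ∃ δ > 0, ∀ φ : ℝ → ℝ, ContDiff ℝ 1 φ →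
        (∀ R ∈ Set.Icc 0 L, |φ R| + |deriv φ R| < δ) →
        ladderEnergy ε U₀ L θ ≤ ladderEnergy ε U₀ L (θ + φ)) ∧
    (θ L ∈ Set.Ioo Real.pi (3 * Real.pi / 2) →
      ∀ δ > 0, ∃ φ : ℝ → ℝ, ContDiff ℝ 1 φ ∧
        (∀ R ∈ Set.Icc 0 L, |φ R| + |deriv φ R| < δ) ∧
        ladderEnergy ε U₀ L (θ + φ) < ladderEnergy ε U₀ L θ) := by
  have hθ1 : ContDiff ℝ 1 θ := hθ.of_le (by norm_num)
  have hd : ContDiff ℝ 1 (deriv θ) := by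
    have : ContDiff ℝ (1+1) θ := by norm_num; exact hθ
    exact (contDiff_succ_iff_deriv.1 this).2.2
  have h0L : θ 0 = Real.pi - θ L := by
    have := hsym L ⟨hL.le, le_rfl⟩
    rw [sub_self] at this
    linarith
  have hs0 : Real.sin (2 * θ 0) = - Real.sin (2 * θ L) := by
    rw [h0L, show 2 * (Real.pi - θ L) = 2 * Real.pi - 2 * θ L by ring, Real.sin_two_pi_sub]
  have cont : ∀ φ : ℝ → ℝ, ContDiff ℝ 1 φ → Continuous (fun R => (deriv θ R - U₀) * deriv φ R
      + (deriv φ R)^2/2 + ε * (Real.cos (2 * θ R + 2 * φ R) - Real.cos (2 * θ R))) := by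
    intro φ hφ
    have c1 := hθ1.continuous
    have c2 := hφ.continuous
    have c3 := hθ1.continuous_deriv le_rfl
    have c4 := hφ.continuous_deriv le_rfl
    fun_prop
  constructor
  · rintro ⟨hl, hr⟩
    have hsL : Real.sin (2 * θ L) < 0 := by
      have := Real.sin_pos_of_pos_of_lt_pi (x := 2 * θ L - Real.pi) (by linarith) (by linarith)
      rw [Real.sin_sub_pi] at this
      linarith
    have hm : MonotoneOn θ (Set.Icc 0 L) := by
      apply monotoneOn_of_deriv_nonneg (convex_Icc _ _) hθ1.continuous.continuousOn
        (hθ1.differentiable one_ne_zero).differentiableOn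
      intro x hx
      exact (hmono x (interior_subset hx)).le
    have hmid : θ (L/2) = Real.pi/2 := by
      have := hsym (L/2) ⟨by linarith, by linarith⟩
      rw [show L - L/2 = L/2 by ring] at this
      linarith
    have hsgn : ∀ R ∈ Set.Icc 0 L, Real.sin (2 * θ R) * (R - L/2) ≤ 0 := by
      intro R hR
      rcases le_total R (L/2) with h | h
      · have a1 := hm hR ⟨by linarith, by linarith⟩ h
        have a2 := hm ⟨le_rfl, hL.le⟩ hR hR.1
        apply mul_nonpos_of_nonneg_of_nonpos _ (by linarith)
        apply Real.sin_nonneg_of_nonneg_of_le_pi <;> linarith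
      · have a1 := hm ⟨by linarith, by linarith⟩ hR h
        have a2 := hm hR ⟨hL.le, le_rfl⟩ hR.2
        apply mul_nonpos_of_nonpos_of_nonneg _ (by linarith)
        have := Real.sin_nonneg_of_nonneg_of_le_pi (x := 2 * θ R - Real.pi)
          (by linarith) (by linarith)
        rw [Real.sin_sub_pi] at this
        linarith
    obtain ⟨pL, hpL⟩ : ∃ p, p = -2 * ε * Real.sin (2 * θ L) / U₀ := ⟨_, rfl⟩
    have hpLpos : 0 < pL := by
      rw [hpL]; apply div_pos _ hU₀; nlinarith
    obtain ⟨η, hη, hη1, hη2⟩ : ∃ η : ℝ, 0 < η ∧ η * (L/2)^2 ≤ 1/2 ∧ η * (L/2) ≤ pL := by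
      refine ⟨min (1/2 / (L/2)^2) (pL / (L/2)), by positivity, ?_, ?_⟩
      · rw [← le_div_iff₀ (by positivity)]; exact min_le_left _ _
      · rw [← le_div_iff₀ (by positivity)]; exact min_le_right _ _
    refine ⟨min (1/2) (η/(32*ε)), by positivity, ?_⟩
    intro φ hφ hsmall
    rw [← sub_nonneg, energy_diff ε U₀ L θ φ hθ1 hφ]
    have key := intervalIntegral.sub_le_integral_of_hasDeriv_right_of_le (a := 0) (b := L) hL.le
      (fun R hR => (calib ε U₀ η (L/2) R θ φ hθ hφ (hmono R hR) (hEL R hR)).continuousAt.continuousWithinAt)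
      (fun R hR => (calib ε U₀ η (L/2) R θ φ hθ hφ (hmono R (Set.Ioo_subset_Icc_self hR))
        (hEL R (Set.Ioo_subset_Icc_self hR))).hasDerivWithinAt)
      ((cont φ hφ).continuousOn.integrableOn_Icc) ?_
    · refine le_trans ?_ key
      simp only [hb0, hbL, hs0]
      rw [show -2 * ε * -Real.sin (2 * θ L) / U₀ = - pL by rw [hpL]; ring, ← hpL]
      have : 0 ≤ (pL - η * (L/2)) * (φ L ^2 + φ 0 ^ 2) :=
        mul_nonneg (by linarith) (by positivity)
      nlinarith
    · intro R hR
      have hR := Set.Ioo_subset_Icc_self hR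
      have hs := hsmall R hR
      have hs1 : |φ R| < 1/2 := by
        have := min_le_left (1/2) (η/(32*ε)); linarith [abs_nonneg (deriv φ R)]
      have hs2 : |φ R| * (32 * ε) < η := by
        rw [← lt_div_iff₀ (by positivity)]
        have := min_le_right (1/2) (η/(32*ε)); linarith [abs_nonneg (deriv φ R)]
      have ht := (abs_le.1 (cos_taylor (2 * θ R) (φ R) hs1.le)).1
      have hw := hmono R hR
      have hpx : 0 ≤ (-2 * ε * Real.sin (2 * θ R) / deriv θ R) * (R - L/2) := by
        rw [div_mul_eq_mul_div]
        apply div_nonneg _ hw.le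
        nlinarith [hsgn R hR]
      generalize -2 * ε * Real.sin (2 * θ R) / deriv θ R = p at *
      have hx : η * (R - L/2)^2 ≤ 1/2 := by
        refine le_trans ?_ hη1
        have : (R - L/2)^2 ≤ (L/2)^2 := by
          apply sq_le_sq'  <;> linarith [hR.1, hR.2]
        nlinarith
      have h3 : 32 * ε * |φ R|^3 ≤ η * φ R ^ 2 := by
        rw [← sq_abs (φ R)]
        nlinarith [sq_nonneg |φ R|]
      have h4 : 0 ≤ φ R ^ 2 * (η / 2 - η * (η * (R - L/2)^2) ) :=
        mul_nonneg (sq_nonneg _) (by nlinarith)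
      have h5 : 0 ≤ η * (p * (R - L/2)) * φ R ^ 2 := by positivity
      have h6 := mul_le_mul_of_nonneg_left ht hε.le
      nlinarith [sq_nonneg (deriv φ R - (p - η * (R - L/2)) * φ R)]
  · rintro ⟨hl, hr⟩ δ hδ
    have hsL : 0 < Real.sin (2 * θ L) := by
      have := Real.sin_pos_of_pos_of_lt_pi (x := 2 * θ L - 2 * Real.pi) (by linarith) (by linarith)
      rwa [Real.sin_sub_two_pi] at this
    obtain ⟨pL, hpL⟩ : ∃ p, p = 2 * ε * Real.sin (2 * θ L) / U₀ := ⟨_, rfl⟩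
    have hpLpos : 0 < pL := by
      rw [hpL]; positivity
    obtain ⟨M, hM⟩ := isCompact_Icc.exists_bound_of_continuousOn (s := Set.Icc 0 L)
      hd.continuous.continuousOn
    obtain ⟨N, hN⟩ := isCompact_Icc.exists_bound_of_continuousOn (s := Set.Icc 0 L)
      (hd.continuous_deriv le_rfl).continuousOn
    simp only [Real.norm_eq_abs] at hM hN
    have hM0 : 0 < M := by
      have := hM 0 ⟨le_rfl, hL.le⟩
      rw [hb0, abs_of_pos hU₀] at this; linarith
    have hN0 : 0 ≤ N := (abs_nonneg _).trans (hN 0 ⟨le_rfl, hL.le⟩)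
    obtain ⟨t, ht, ht1, ht2, ht3⟩ : ∃ t : ℝ, 0 < t ∧ t * (M + N) < δ ∧ t * M ≤ 1/2 ∧
        t * (8 * ε * M^3 * L) < pL * U₀^2 := by
      refine ⟨min (δ/2/(M+N)) (min (1/2/M) (pL * U₀^2/2/(8 * ε * M^3 * L))), by positivity, ?_, ?_, ?_⟩
      · refine lt_of_le_of_lt (b := δ/2) ?_ (by linarith)
        rw [← le_div_iff₀ (by positivity)]; exact min_le_left _ _
      · rw [← le_div_iff₀ (by positivity)]; exact (min_le_right _ _).trans (min_le_left _ _)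
      · have : 0 < pL * U₀^2 := by positivity
        refine lt_of_le_of_lt (b := pL * U₀^2/2) ?_ (by linarith)
        rw [← le_div_iff₀ (by positivity)]; exact (min_le_right _ _).trans (min_le_right _ _)
    have hφ : ContDiff ℝ 1 (fun R => t * deriv θ R) := contDiff_const.mul hd
    have hdφ : ∀ R, deriv (fun R => t * deriv θ R) R = t * deriv (deriv θ) R := fun R =>
      deriv_const_mul _ (hd.differentiable one_ne_zero R)
    refine ⟨fun R => t * deriv θ R, hφ, ?_, ?_⟩
    · intro R hR
      rw [hdφ, abs_mul, abs_mul, abs_of_pos ht]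
      nlinarith [hM R hR, hN R hR]
    rw [← sub_neg, energy_diff ε U₀ L θ _ hθ1 hφ]
    have key := intervalIntegral.integral_le_sub_of_hasDeriv_right_of_le (a := 0) (b := L) hL.le
      (fun R hR => ((calib ε U₀ 0 0 R θ _ hθ hφ (hmono R hR) (hEL R hR)).fun_add
        ((hasDerivAt_id' R).const_mul (8 * ε * (t * M)^3))).continuousAt.continuousWithinAt)
      (fun R hR => ((calib ε U₀ 0 0 R θ _ hθ hφ (hmono R (Set.Ioo_subset_Icc_self hR))
        (hEL R (Set.Ioo_subset_Icc_self hR))).fun_add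
        ((hasDerivAt_id' R).const_mul (8 * ε * (t * M)^3))).hasDerivWithinAt)
      ((cont _ hφ).continuousOn.integrableOn_Icc) ?_
    · refine lt_of_le_of_lt key ?_
      simp only [hb0, hbL, hs0]
      rw [show -2 * ε * -Real.sin (2 * θ L) / U₀ = pL by rw [hpL]; ring,
        show -2 * ε * Real.sin (2 * θ L) / U₀ = -pL by rw [hpL]; ring]
      have := mul_lt_mul_of_pos_left ht3 (pow_pos ht 2)
      nlinarith
    · intro R hR
      have hR := Set.Ioo_subset_Icc_self hR
      have hw := hmono R hR
      have hMR := hM R hR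
      rw [abs_of_pos hw] at hMR
      have hab : |t * deriv θ R| = t * deriv θ R := abs_of_pos (by positivity)
      have hle : t * deriv θ R ≤ t * M := by gcongr
      have htt := (abs_le.1 (cos_taylor (2 * θ R) (t * deriv θ R) (by rw [hab]; linarith))).2
      rw [hab] at htt
      have h3 : (t * deriv θ R)^3 ≤ (t * M)^3 := by gcongr
      have h6 := mul_le_mul_of_nonneg_left (htt.trans (mul_le_mul_of_nonneg_left h3 (by norm_num))) hε.le
      simp only [hdφ]
      have hE : deriv (deriv θ) R = (-2 * ε * Real.sin (2 * θ R) / deriv θ R) * deriv θ R := by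
        rw [div_mul_cancel₀ _ hw.ne']; linarith [hEL R hR]
      generalize -2 * ε * Real.sin (2 * θ R) / deriv θ R = p at *
      rw [hE]
      nlinarith
end
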